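/- Average density over all selections: for every k ≥ 1 and all natural numbers a ≤ b, the sum over all selections (S_1, ..., S_k) of level k of the number of integers n with a ≤ n ≤ b that are permitted for the selection equals N_k · (b − a + 1) · ((p_1 − 1)/p_1) · ∏_{h=2}^{k} (p_h − 2)/p_h, where N_k = p_1 · ∏_{h=2}^{k} C(p_h, 2) is the total number of selections of level k; equivalently, the average over all selections of the density of permitted integers in the interval [a, b] equals δ_k. -/

import Mathlib

/-- The `h`-th prime number (1-indexed): `nthPrime 1 = 2`, `nthPrime 2 = 3`, ... -/
noncomputable def nthPrime (h : ℕ) : ℕ := Nat.nth Nat.Prime (h - 1)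

/-- `mK k = p_1 * p_2 * ⋯ * p_k`, the product of the first `k` primes. -/
noncomputable def mK (k : ℕ) : ℕ := ∏ h ∈ Finset.Icc 1 k, nthPrime h

/-- `cK k = (p_1 - 1) * (p_2 - 2) * ⋯ * (p_k - 2)`. -/
noncomputable def cK (k : ℕ) : ℕ := (nthPrime 1 - 1) * ∏ h ∈ Finset.Icc 2 k, (nthPrime h - 2)

/-- A selection of level `k`: a family of sets of residues `S h ⊆ {0, …, p_h - 1}`
with `|S 1| = 1` and `|S h| = 2` for `2 ≤ h ≤ k`. -/
def IsSelection (k : ℕ) (S : ℕ → Finset ℕ) : Prop :=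
  (∀ h, 1 ≤ h → h ≤ k → S h ⊆ Finset.range (nthPrime h)) ∧
    (S 1).card = 1 ∧ ∀ h, 2 ≤ h → h ≤ k → (S h).card = 2

/-- `n` is permitted for a selection of level `k` if for every `1 ≤ h ≤ k` the residue of
`n` modulo `p_h` is not a selected remainder. -/
def Permitted (k : ℕ) (S : ℕ → Finset ℕ) (n : ℕ) : Prop :=
  ∀ h ∈ Finset.Icc 1 k, n % nthPrime h ∉ S h

noncomputable instance (k : ℕ) (S : ℕ → Finset ℕ) : DecidablePred (Permitted k S) := fun n =>
  inferInstanceAs (Decidable (∀ h ∈ Finset.Icc 1 k, n % nthPrime h ∉ S h))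

/-- The density `δ_k = c_k · p_k / m_k` of permitted `k`-tuples within a period. -/
noncomputable def deltaK (k : ℕ) : ℝ := (cK k : ℝ) * nthPrime k / mK k

/-- The finite set of all selections of level `k`, viewed as dependent functions on
`Finset.Icc 1 k`: `S h ⊆ {0, …, p_h - 1}` with `|S 1| = 1` and `|S h| = 2` for `h ≥ 2`. -/
noncomputable def selections (k : ℕ) : Finset ((h : ℕ) → h ∈ Finset.Icc 1 k → Finset ℕ) :=
  (Finset.Icc 1 k).pi fun h =>
    (Finset.range (nthPrime h)).powerset.filter
      (fun s => s.card = if h = 1 then 1 else 2)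

theorem aux_card_filter (p c r : ℕ) (hr : r < p) :
    (((Finset.range p).powerset.filter (fun s => s.card = c)).filter
      (fun s => r ∉ s)).card = (p - 1).choose c := by
  have h : ((Finset.range p).powerset.filter (fun s => s.card = c)).filter
      (fun s => r ∉ s) = ((Finset.range p).erase r).powersetCard c := by
    ext s
    simp only [Finset.mem_filter, Finset.mem_powerset, Finset.mem_powersetCard,
      Finset.subset_erase]
    tauto
  rw [h, Finset.card_powersetCard, Finset.card_erase_of_mem (Finset.mem_range.2 hr),
    Finset.card_range]

theorem aux_prime (h : ℕ) : (nthPrime h).Prime := Nat.prime_nth_prime _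

theorem aux_choose (p : ℕ) (hp : 0 < p) :
    (((p - 1).choose 2 : ℕ) : ℝ) = (p.choose 2 : ℕ) * (((p : ℝ) - 2) / p) := by
  obtain ⟨q, rfl⟩ : ∃ q, p = q + 1 := ⟨p - 1, by omega⟩
  have : ((q : ℝ) + 1) ≠ 0 := by positivity
  rw [Nat.add_sub_cancel, Nat.cast_choose_two, Nat.cast_choose_two]
  push_cast
  field_simp
  ring

theorem aux_count (k n : ℕ) :
    ((selections k).filter
      (fun S => ∀ h, ∀ hh : h ∈ Finset.Icc 1 k, n % nthPrime h ∉ S h hh)).card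
      = ∏ h ∈ Finset.Icc 1 k, (nthPrime h - 1).choose (if h = 1 then 1 else 2) := by
  have h1 : (selections k).filter
      (fun S => ∀ h, ∀ hh : h ∈ Finset.Icc 1 k, n % nthPrime h ∉ S h hh)
      = (Finset.Icc 1 k).pi fun h =>
        ((Finset.range (nthPrime h)).powerset.filter
          (fun s => s.card = if h = 1 then 1 else 2)).filter (fun s => n % nthPrime h ∉ s) := by
    ext S
    rw [selections, Finset.mem_filter, Finset.mem_pi, Finset.mem_pi]
    constructor
    · rintro ⟨h1, h2⟩ h hh
      exact Finset.mem_filter.2 ⟨h1 h hh, h2 h hh⟩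
    · intro H
      exact ⟨fun h hh => (Finset.mem_filter.1 (H h hh)).1,
        fun h hh => (Finset.mem_filter.1 (H h hh)).2⟩
  rw [h1, Finset.card_pi]
  exact Finset.prod_congr rfl fun h _ =>
    aux_card_filter _ _ _ (Nat.mod_lt _ (aux_prime h).pos)

/-- Average density over all selections: the sum, over all selections of level `k`, of the
number of permitted integers in `[a, b]` equals
`N_k · (b - a + 1) · ((p_1 - 1)/p_1) · ∏_{h=2}^{k} (p_h - 2)/p_h`, where
`N_k = p_1 · ∏_{h=2}^{k} C(p_h, 2)` is the number of selections of level `k`; equivalently,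
the average density of permitted integers in `[a, b]` equals `δ_k`. -/
theorem sum_selections_card_permitted (k : ℕ) (hk : 1 ≤ k) (a b : ℕ) (hab : a ≤ b) :
    (∑ S ∈ selections k,
        (((Finset.Icc a b).filter
          (fun n => ∀ h, ∀ hh : h ∈ Finset.Icc 1 k, n % nthPrime h ∉ S h hh)).card : ℝ))
      = ((nthPrime 1 * ∏ h ∈ Finset.Icc 2 k, (nthPrime h).choose 2 : ℕ) : ℝ)
        * ((b : ℝ) - a + 1)
        * (((nthPrime 1 : ℝ) - 1) / nthPrime 1)
        * ∏ h ∈ Finset.Icc 2 k, ((nthPrime h : ℝ) - 2) / nthPrime h := by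
  have hsplit : Finset.Icc 1 k = insert 1 (Finset.Icc 2 k) := by
    ext x
    simp only [Finset.mem_Icc, Finset.mem_insert]
    omega
  have hswap : (∑ S ∈ selections k, ((Finset.Icc a b).filter
      (fun n => ∀ h, ∀ hh : h ∈ Finset.Icc 1 k, n % nthPrime h ∉ S h hh)).card)
      = ∑ n ∈ Finset.Icc a b, ((selections k).filter
      (fun S => ∀ h, ∀ hh : h ∈ Finset.Icc 1 k, n % nthPrime h ∉ S h hh)).card := by
    simp only [Finset.card_filter]
    exact Finset.sum_comm
  rw [← Nat.cast_sum, hswap, Finset.sum_congr rfl fun n _ => aux_count k n, Finset.sum_const,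
    Nat.card_Icc, hsplit, Finset.prod_insert (by simp)]
  have hprod : ((∏ h ∈ Finset.Icc 2 k,
      (nthPrime h - 1).choose (if h = 1 then 1 else 2) : ℕ) : ℝ)
      = ((∏ h ∈ Finset.Icc 2 k, (nthPrime h).choose 2 : ℕ) : ℝ)
        * ∏ h ∈ Finset.Icc 2 k, ((nthPrime h : ℝ) - 2) / nthPrime h := by
    rw [Nat.cast_prod, Nat.cast_prod, ← Finset.prod_mul_distrib]
    refine Finset.prod_congr rfl fun h hh => ?_
    have : h ≠ 1 := by
      have := (Finset.mem_Icc.1 hh).1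
      omega
    rw [if_neg this]
    exact aux_choose _ (aux_prime h).pos
  have hp : (nthPrime 1 : ℝ) ≠ 0 := by exact_mod_cast (aux_prime 1).ne_zero
  rw [smul_eq_mul, Nat.cast_mul, Nat.cast_mul, hprod, if_pos rfl, Nat.choose_one_right,
    Nat.cast_sub (by omega : a ≤ b + 1), Nat.cast_sub (aux_prime 1).one_le, Nat.cast_mul]
  push_cast
  field_simp
  ring
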